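/- For every λ ∈ (−1, 0) and every p > 0, the improper integral lim_{T→∞} ∫₀^T cos(px) x^λ dx exists and equals (π/2) · p^{−λ−1} / (cos(πλ/2) · Γ(−λ)), where Γ is the Gamma function. -/

import Mathlib

open Filter

open MeasureTheory Set in
lemma aux_beta (a p : ℝ) (ha : 0 < a) (ha1 : a < 1) (hp : 0 < p) :
    IntegrableOn (fun t : ℝ => t ^ a / (p ^ 2 + t ^ 2)) (Ioi 0) ∧
    ∫ t in Ioi (0:ℝ), t ^ a / (p ^ 2 + t ^ 2)
      = Real.pi / 2 * p ^ (a - 1) / Real.cos (Real.pi * a / 2) := by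
  have hmeas : AEStronglyMeasurable
      (Function.uncurry fun u t : ℝ => t ^ a * Real.exp (-(u * (p ^ 2 + t ^ 2))))
      ((volume.restrict (Ioi (0:ℝ))).prod (volume.restrict (Ioi (0:ℝ)))) := by
    apply Measurable.aestronglyMeasurable
    unfold Function.uncurry
    fun_prop
  have hslice : ∀ u ∈ Ioi (0:ℝ),
      ∫ t in Ioi (0:ℝ), t ^ a * Real.exp (-(u * (p ^ 2 + t ^ 2)))
        = (1 / 2 * Real.Gamma ((a + 1) / 2)) *
          (u ^ ((1 - a) / 2 - 1) * Real.exp (-(p ^ 2 * u))) := by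
    intro u hu
    have h := integral_rpow_mul_exp_neg_mul_rpow (p := 2) (q := a) (b := u)
      two_pos (by linarith) hu
    have e : ∀ t : ℝ, t ^ a * Real.exp (-(u * (p ^ 2 + t ^ 2)))
        = Real.exp (-(p ^ 2 * u)) * (t ^ a * Real.exp (-u * t ^ (2:ℝ))) := by
      intro t
      rw [Real.rpow_two, mul_left_comm, ← Real.exp_add]
      ring_nf
    simp_rw [e]
    rw [integral_const_mul, h, show -(a + 1) / 2 = (1 - a) / 2 - 1 by ring]
    ring
  have hint : Integrable
      (Function.uncurry fun u t : ℝ => t ^ a * Real.exp (-(u * (p ^ 2 + t ^ 2))))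
      ((volume.restrict (Ioi (0:ℝ))).prod (volume.restrict (Ioi (0:ℝ)))) := by
    rw [integrable_prod_iff hmeas]
    constructor
    · filter_upwards [ae_restrict_mem measurableSet_Ioi] with u hu
      have h := (integrableOn_rpow_mul_exp_neg_mul_sq (b := u) hu (s := a)
        (by linarith)).const_mul (Real.exp (-(p ^ 2 * u)))
      refine h.congr (ae_of_all _ fun t => ?_)
      simp only [Function.uncurry]
      rw [mul_left_comm, ← Real.exp_add]
      ring_nf
    · have h := (integrableOn_rpow_mul_exp_neg_mul_rpow (p := 1) (b := p ^ 2)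
        (s := (1 - a) / 2 - 1) (by linarith) one_pos (by positivity)).const_mul
        (1 / 2 * Real.Gamma ((a + 1) / 2))
      refine h.congr ?_
      filter_upwards [ae_restrict_mem measurableSet_Ioi] with u hu
      simp only [Function.uncurry, Real.rpow_one, neg_mul]
      rw [← hslice u hu]
      refine setIntegral_congr_fun measurableSet_Ioi fun t ht => ?_
      have ht' : (0:ℝ) < t := ht
      rw [Real.norm_of_nonneg (by positivity)]
  have hin : ∀ t ∈ Ioi (0:ℝ),
      ∫ u in Ioi (0:ℝ), t ^ a * Real.exp (-(u * (p ^ 2 + t ^ 2))) = t ^ a / (p ^ 2 + t ^ 2) := by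
    intro t ht
    have h := Real.integral_rpow_mul_exp_neg_mul_Ioi (a := 1) (r := p ^ 2 + t ^ 2) one_pos
      (by positivity)
    simp only [sub_self, Real.rpow_zero, one_mul, Real.rpow_one, Real.Gamma_one, mul_one] at h
    rw [integral_const_mul]
    simp_rw [mul_comm _ (p ^ 2 + t ^ 2)]
    rw [h]
    ring
  constructor
  · refine hint.integral_prod_right.congr ?_
    filter_upwards [ae_restrict_mem measurableSet_Ioi] with t ht
    exact hin t ht
  · rw [← setIntegral_congr_fun measurableSet_Ioi hin, ← integral_integral_swap hint,
      setIntegral_congr_fun measurableSet_Ioi hslice, integral_const_mul,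
      Real.integral_rpow_mul_exp_neg_mul_Ioi (by linarith) (by positivity)]
    have hr := Real.Gamma_mul_Gamma_one_sub ((a + 1) / 2)
    rw [show 1 - (a + 1) / 2 = (1 - a) / 2 by ring,
      show Real.pi * ((a + 1) / 2) = Real.pi * a / 2 + Real.pi / 2 by ring,
      Real.sin_add_pi_div_two] at hr
    have hpw : (1 / p ^ 2) ^ ((1 - a) / 2) = p ^ (a - 1) := by
      rw [one_div, ← Real.rpow_two, ← Real.rpow_neg hp.le, ← Real.rpow_mul hp.le]
      ring_nf
    rw [hpw]
    linear_combination (1 / 2 * p ^ (a - 1)) * hr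

lemma aux_cos (p t T : ℝ) (hp : 0 < p) :
    ∫ x in (0:ℝ)..T, Real.cos (p * x) * Real.exp (-(x * t))
      = (t + Real.exp (-(T * t)) * (p * Real.sin (p * T) - t * Real.cos (p * T)))
        / (p ^ 2 + t ^ 2) := by
  have hne : p ^ 2 + t ^ 2 ≠ 0 := by positivity
  have hd : ∀ x ∈ Set.uIcc 0 T, HasDerivAt
      (fun x => Real.exp (-(x * t)) * (p * Real.sin (p * x) - t * Real.cos (p * x))
        / (p ^ 2 + t ^ 2)) (Real.cos (p * x) * Real.exp (-(x * t))) x := by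
    intro x _
    have h0 : HasDerivAt (fun x : ℝ => p * x) p x := by
      simpa using (hasDerivAt_id x).const_mul p
    have h1 : HasDerivAt (fun x : ℝ => -(x * t)) (-t) x := by
      have h : HasDerivAt (fun x : ℝ => x * t) t x := by
        simpa using (hasDerivAt_id x).mul_const t
      exact h.neg
    refine HasDerivAt.congr_deriv
      ((h1.exp.mul ((h0.sin.const_mul p).sub (h0.cos.const_mul t))).div_const
      (p ^ 2 + t ^ 2)) ?_
    simp only [Pi.sub_apply]
    field_simp
    ring
  rw [intervalIntegral.integral_eq_sub_of_hasDerivAt hd]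
  · simp
    field_simp
    ring
  · apply Continuous.intervalIntegrable
    fun_prop

open MeasureTheory Set in
lemma aux_fubini (a p T : ℝ) (ha : 0 < a) (ha1 : a < 1) (hp : 0 < p) (hT : 0 ≤ T) :
    Real.Gamma a * ∫ x in (0:ℝ)..T, Real.cos (p * x) * x ^ (-a) =
    ∫ t in Ioi (0:ℝ), t ^ (a - 1) *
      ((t + Real.exp (-(T * t)) * (p * Real.sin (p * T) - t * Real.cos (p * T)))
        / (p ^ 2 + t ^ 2)) := by
  have hslice : ∀ x ∈ Ioc 0 T,
      ∫ t in Ioi (0:ℝ), t ^ (a - 1) * Real.exp (-(x * t)) = x ^ (-a) * Real.Gamma a := by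
    intro x hx
    rw [Real.integral_rpow_mul_exp_neg_mul_Ioi ha hx.1, one_div, Real.inv_rpow hx.1.le,
      Real.rpow_neg hx.1.le]
  have hH : Integrable (Function.uncurry fun x t : ℝ => t ^ (a - 1) * Real.exp (-(x * t)))
      ((volume.restrict (Ioc 0 T)).prod (volume.restrict (Ioi (0:ℝ)))) := by
    rw [integrable_prod_iff]
    · constructor
      · filter_upwards [ae_restrict_mem measurableSet_Ioc] with x hx
        have h := integrableOn_rpow_mul_exp_neg_mul_rpow (p := 1) (b := x)
          (s := a - 1) (by linarith) one_pos hx.1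
        simpa [IntegrableOn, Function.uncurry] using h
      · have h : IntegrableOn (fun x : ℝ => x ^ (-a) * Real.Gamma a) (Ioc 0 T) := by
          have := (intervalIntegral.intervalIntegrable_rpow' (a := 0) (b := T) (r := -a)
            (by linarith)).mul_const (Real.Gamma a)
          exact (intervalIntegrable_iff_integrableOn_Ioc_of_le hT).1 this
        refine Integrable.congr h ?_
        filter_upwards [ae_restrict_mem measurableSet_Ioc] with x hx
        rw [← hslice x hx]
        refine setIntegral_congr_fun measurableSet_Ioi fun t ht => ?_
        have ht' : (0:ℝ) < t := ht
        simp only [Function.uncurry]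
        rw [Real.norm_of_nonneg (by positivity)]
    · apply Measurable.aestronglyMeasurable
      unfold Function.uncurry
      fun_prop
  have hG : Integrable (Function.uncurry fun x t : ℝ =>
      Real.cos (p * x) * (t ^ (a - 1) * Real.exp (-(x * t))))
      ((volume.restrict (Ioc 0 T)).prod (volume.restrict (Ioi (0:ℝ)))) := by
    refine Integrable.mono' hH.norm ?_ (ae_of_all _ ?_)
    · apply Measurable.aestronglyMeasurable
      unfold Function.uncurry
      fun_prop
    · rintro ⟨x, t⟩
      simp only [Function.uncurry]
      rw [norm_mul]
      exact mul_le_of_le_one_left (norm_nonneg _) (Real.abs_cos_le_one _)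
  have hsw := integral_integral_swap hG
  have hL : ∫ x in Ioc 0 T, ∫ t in Ioi (0:ℝ),
      Real.cos (p * x) * (t ^ (a - 1) * Real.exp (-(x * t)))
      = Real.Gamma a * ∫ x in (0:ℝ)..T, Real.cos (p * x) * x ^ (-a) := by
    rw [intervalIntegral.integral_of_le hT, ← integral_const_mul]
    refine setIntegral_congr_fun measurableSet_Ioc fun x hx => ?_
    rw [integral_const_mul, hslice x hx]
    ring
  rw [← hL, hsw]
  refine setIntegral_congr_fun measurableSet_Ioi fun t ht => ?_
  rw [← aux_cos p t T hp, intervalIntegral.integral_of_le hT, ← integral_const_mul]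
  congr 1
  ext x
  ring

open MeasureTheory Set in
lemma aux_lim (a p : ℝ) (ha : 0 < a) (ha1 : a < 1) (hp : 0 < p) :
    Tendsto (fun T : ℝ => ∫ t in Ioi (0:ℝ), t ^ (a - 1) *
      ((t + Real.exp (-(T * t)) * (p * Real.sin (p * T) - t * Real.cos (p * T)))
        / (p ^ 2 + t ^ 2))) atTop (nhds (∫ t in Ioi (0:ℝ), t ^ a / (p ^ 2 + t ^ 2))) := by
  have hpow : ∀ t : ℝ, 0 < t → t ^ a = t ^ (a - 1) * t := by
    intro t ht
    rw [Real.rpow_sub_one ht.ne']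
    field_simp
  have habs : ∀ T t : ℝ, 0 < t →
      |p * Real.sin (p * T) - t * Real.cos (p * T)| ≤ p + t := by
    intro T t ht
    refine (abs_sub _ _).trans ?_
    rw [abs_mul, abs_mul, abs_of_pos hp, abs_of_pos ht]
    have h1 := Real.abs_sin_le_one (p * T)
    have h2 := Real.abs_cos_le_one (p * T)
    nlinarith
  refine tendsto_integral_filter_of_dominated_convergence
    (fun t => t ^ a / (p ^ 2 + t ^ 2) + 2 / p * (Real.exp (-t) * t ^ (a - 1))) ?_ ?_ ?_ ?_
  · refine Eventually.of_forall fun T => ?_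
    apply Measurable.aestronglyMeasurable
    fun_prop
  · filter_upwards [eventually_ge_atTop 1] with T hT
    filter_upwards [ae_restrict_mem measurableSet_Ioi] with t ht
    have ht' : (0:ℝ) < t := ht
    have hq : 0 < p ^ 2 + t ^ 2 := by positivity
    have hw : 0 < t ^ (a - 1) := by positivity
    have hee : Real.exp (-(T * t)) ≤ Real.exp (-t) := by
      apply Real.exp_le_exp.2
      nlinarith
    have h3 : (p + t) / (p ^ 2 + t ^ 2) ≤ 2 / p := by
      rw [div_le_div_iff₀ hq hp]
      nlinarith [sq_nonneg (p - t)]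
    rw [norm_mul, Real.norm_of_nonneg hw.le, norm_div, Real.norm_of_nonneg hq.le]
    have h4 : ‖t + Real.exp (-(T * t)) * (p * Real.sin (p * T) - t * Real.cos (p * T))‖
        ≤ t + Real.exp (-t) * (p + t) := by
      refine (norm_add_le _ _).trans ?_
      rw [Real.norm_of_nonneg ht'.le, norm_mul, Real.norm_of_nonneg (Real.exp_pos _).le]
      gcongr
      exact habs T t ht'
    calc _ ≤ t ^ (a - 1) * ((t + Real.exp (-t) * (p + t)) / (p ^ 2 + t ^ 2)) := by gcongr
      _ = t ^ a / (p ^ 2 + t ^ 2)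
          + (p + t) / (p ^ 2 + t ^ 2) * (Real.exp (-t) * t ^ (a - 1)) := by
        rw [hpow t ht']; ring
      _ ≤ _ := by gcongr
  · exact (aux_beta a p ha ha1 hp).1.add ((Real.GammaIntegral_convergent ha).const_mul _)
  · filter_upwards [ae_restrict_mem measurableSet_Ioi] with t ht
    have ht' : (0:ℝ) < t := ht
    rw [hpow t ht', mul_div_assoc]
    refine Tendsto.const_mul _ (Tendsto.div_const ?_ _)
    have h0 : Tendsto (fun T : ℝ => Real.exp (-(T * t))) atTop (nhds 0) :=
      Real.tendsto_exp_neg_atTop_nhds_zero.comp (tendsto_id.atTop_mul_const ht')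
    have h1 : Tendsto (fun T : ℝ => Real.exp (-(T * t)) *
        (p * Real.sin (p * T) - t * Real.cos (p * T))) atTop (nhds 0) := by
      refine squeeze_zero_norm (a := fun T => Real.exp (-(T * t)) * (p + t)) (fun T => ?_) ?_
      · rw [norm_mul, Real.norm_of_nonneg (Real.exp_pos _).le]
        gcongr
        exact habs T t ht'
      · simpa using h0.mul_const (p + t)
    simpa using h1.const_add t

/-- The cosine transform of the homogeneous function `x^λ` for `λ ∈ (-1,0)`:
`lim_{T→∞} ∫₀^T cos(px) x^λ dx = (π/2) p^{-λ-1} / (cos(πλ/2) Γ(-λ))`. -/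
theorem cosine_transform_rpow (lam p : ℝ) (hlam : lam ∈ Set.Ioo (-1:ℝ) 0) (hp : 0 < p) :
    Tendsto (fun T : ℝ => ∫ x in (0:ℝ)..T, Real.cos (p * x) * x ^ lam) atTop
      (nhds ((Real.pi/2) * p ^ (-lam - 1) /
        (Real.cos (Real.pi * lam / 2) * Real.Gamma (-lam)))) := by
  obtain ⟨a, rfl⟩ : ∃ a, lam = -a := ⟨-lam, by ring⟩
  have ha : 0 < a := by linarith [hlam.2]
  have ha1 : a < 1 := by linarith [hlam.1]
  have hg : Real.Gamma a ≠ 0 := (Real.Gamma_pos_of_pos ha).ne'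
  have h := (aux_lim a p ha ha1 hp).div_const (Real.Gamma a)
  rw [(aux_beta a p ha ha1 hp).2, div_div] at h
  rw [neg_neg, show Real.pi * -a / 2 = -(Real.pi * a / 2) by ring, Real.cos_neg]
  refine h.congr' ?_
  filter_upwards [eventually_ge_atTop 0] with T hT
  rw [← aux_fubini a p T ha ha1 hp hT]
  field_simp
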